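/- The 4×4 integer matrix A_{2,II} = [[2,-2,-6,-2],[-2,2,-2,-6],[-6,-2,2,-2],[-2,-6,-2,2]] satisfies: (a) it is a symmetric generalized Cartan matrix (symmetric, all diagonal entries 2, all off-diagonal entries nonpositive); (b) it has rank 3 over ℚ; (c) the real quadratic form x ↦ xᵀAx on ℝ⁴ is equivalent to the weighted sum of squares with weights (1,1,−1,0), i.e. A is hyperbolic of rank 3; (d) there exists c ∈ ℚ⁴ with Ac = −(1,1,1,1)ᵀ and cᵀAc < 0 (a lattice Weyl vector of negative square). -/

import Mathlib

open Matrix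

/-! The matrix is the circulant matrix of `(2, -2, -6, -2)`, so the real and imaginary parts of the
characters of `ℤ/4` are orthogonal eigenvectors, with eigenvalues `8, 8, -8, 0`. This gives the rank
and, after rescaling, the signature. The trivial character has the negative eigenvalue `-8`, so its
multiple `(1/8, 1/8, 1/8, 1/8)` is the Weyl vector. -/

section Diagonalization

variable {n : Type*} [Fintype n] [DecidableEq n]

theorem rank_eq_card_of_mul_mul_eq_diagonal {K : Type*} [Field K] [DecidableEq K]
    {A P Q : Matrix n n K} {d : n → K} (hP : IsUnit P.det) (hQ : IsUnit Q.det)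
    (h : P * A * Q = diagonal d) : A.rank = Fintype.card {i // d i ≠ 0} := by
  rw [← rank_diagonal, ← h, rank_mul_eq_left_of_isUnit_det Q _ hQ,
    rank_mul_eq_right_of_isUnit_det P _ hP]

theorem exists_ne_zero_mul_mul_self_eq_sign (x : ℝ) :
    ∃ r : ℝ, r ≠ 0 ∧ r * x * r = SignType.sign x := by
  rcases eq_or_ne x 0 with rfl | hx
  · exact ⟨1, one_ne_zero, by simp⟩
  · have hsqrt : √|x| ≠ 0 := (Real.sqrt_pos.mpr (abs_pos.mpr hx)).ne'
    refine ⟨(√|x|)⁻¹, inv_ne_zero hsqrt, ?_⟩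
    field_simp
    rw [Real.sq_sqrt (abs_nonneg x), abs_mul_sign]

theorem exists_congruent_diagonal_sign {A Q : Matrix n n ℝ} {d : n → ℝ} (hQ : IsUnit Q.det)
    (h : Qᵀ * A * Q = diagonal d) :
    ∃ P : Matrix n n ℝ, IsUnit P.det ∧
      Pᵀ * A * P = diagonal fun i ↦ (SignType.sign (d i) : ℝ) := by
  choose r hr hrd using fun i ↦ exists_ne_zero_mul_mul_self_eq_sign (d i)
  refine ⟨Q * diagonal r, ?_, ?_⟩
  · rw [det_mul, det_diagonal]
    exact hQ.mul (Finset.prod_ne_zero_iff.mpr fun i _ ↦ hr i).isUnit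
  · calc (Q * diagonal r)ᵀ * A * (Q * diagonal r)
        = diagonal r * (Qᵀ * A * Q) * diagonal r := by
          simp only [transpose_mul, diagonal_transpose, Matrix.mul_assoc]
      _ = diagonal fun i ↦ (SignType.sign (d i) : ℝ) := by
          simp only [h, diagonal_mul_diagonal, hrd]

end Diagonalization

section WeylVector

variable {n : Type*} [Fintype n]

theorem exists_mulVec_eq_neg_one_and_dotProduct_neg [Nonempty n] {K : Type*} [Field K]
    [LinearOrder K] [IsStrictOrderedRing K] {A : Matrix n n K} {s : K} (hs : s < 0)
    (hA : ∀ i, ∑ j, A i j = s) :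
    ∃ c : n → K, (∀ i, (A *ᵥ c) i = -1) ∧ c ⬝ᵥ A *ᵥ c < 0 := by
  have hc : A *ᵥ (fun _ ↦ -s⁻¹) = fun _ ↦ -1 := by
    ext i
    rw [mulVec, dotProduct, ← Finset.sum_mul, hA, mul_neg, mul_inv_cancel₀ hs.ne]
  refine ⟨fun _ ↦ -s⁻¹, congrFun hc, ?_⟩
  rw [hc]
  exact Finset.sum_neg (fun _ _ ↦ by simpa using hs) Finset.univ_nonempty

theorem sum_row_circulant {R : Type*} [AddCommMonoid R] [AddGroup n] (v : n → R) (i : n) :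
    ∑ j, circulant v i j = ∑ k, v k :=
  Equiv.sum_comp (Equiv.subLeft i) v

end WeylVector

section SymmetricCirculant

variable (R : Type*) [CommRing R]

/-- The real Fourier basis of functions on `ℤ/4`, as columns: the real and imaginary parts of the
character `k ↦ i ^ k`, then the trivial character and the character `k ↦ (-1) ^ k`. It diagonalizes
all symmetric circulant matrices of size four. -/
def realFourierMatrix : Matrix (Fin 4) (Fin 4) R :=
  !![1, 0, 1, 1;
    0, 1, 1, -1;
    -1, 0, 1, 1;
    0, -1, 1, -1]

theorem transpose_realFourierMatrix_mul_self :
    (realFourierMatrix R)ᵀ * realFourierMatrix R = diagonal ![2, 2, 4, 4] := by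
  ext i j
  fin_cases i <;> fin_cases j <;>
    norm_num [realFourierMatrix, Matrix.mul_apply, Fin.sum_univ_succ]

theorem isUnit_det_realFourierMatrix (h2 : IsUnit (2 : R)) :
    IsUnit (realFourierMatrix R).det := by
  have hdet : (realFourierMatrix R).det * (realFourierMatrix R).det = 2 ^ 6 := by
    have h := congrArg det (transpose_realFourierMatrix_mul_self R)
    rw [det_mul, det_transpose, det_diagonal] at h
    norm_num [h, Fin.prod_univ_succ]
  exact isUnit_of_mul_isUnit_left (hdet ▸ h2.pow 6)

variable {R}

theorem circulant_mul_realFourierMatrix (a b c : R) :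
    circulant ![a, b, c, b] * realFourierMatrix R =
      realFourierMatrix R * diagonal ![a - c, a - c, a + 2 * b + c, a - 2 * b + c] := by
  ext i j
  fin_cases i <;> fin_cases j <;>
    simp [realFourierMatrix, circulant_apply, Matrix.mul_apply, Fin.sum_univ_four] <;> ring

theorem transpose_realFourierMatrix_mul_circulant_mul (a b c : R) :
    (realFourierMatrix R)ᵀ * circulant ![a, b, c, b] * realFourierMatrix R =
      diagonal ![2 * (a - c), 2 * (a - c), 4 * (a + 2 * b + c), 4 * (a - 2 * b + c)] := by
  rw [Matrix.mul_assoc, circulant_mul_realFourierMatrix, ← Matrix.mul_assoc,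
    transpose_realFourierMatrix_mul_self, diagonal_mul_diagonal]
  congr 1
  ext i
  fin_cases i <;> rfl

end SymmetricCirculant

/-- The matrix `A_{2,II}` from Nikulin's list of all twelve symmetric hyperbolic
generalized Cartan matrices of rank 3 with finite-volume fundamental chamber and
lattice Weyl vector of negative square:
(a) it is a symmetric generalized Cartan matrix;
(b) it has rank 3 over ℚ;
(c) the real quadratic form x ↦ xᵀAx is equivalent to the weighted sum of squares with
    weights (1,1,-1,0,…,0), i.e. A is hyperbolic of rank 3;
(d) it has a lattice Weyl vector of negative square: there is c ∈ ℚ^4 with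
    Ac = -(1,…,1)ᵀ and cᵀAc < 0. -/
theorem stmt_6 :
    let A : Matrix (Fin 4) (Fin 4) ℤ :=
      !![2, -2, -6, -2;
        -2, 2, -2, -6;
        -6, -2, 2, -2;
        -2, -6, -2, 2]
    -- (a) symmetric generalized Cartan matrix
    (Aᵀ = A ∧ (∀ i, A i i = 2) ∧ (∀ i j, i ≠ j → A i j ≤ 0)) ∧
    -- (b) rank 3 over ℚ
    (A.map ((↑·) : ℤ → ℚ)).rank = 3 ∧
    -- (c) hyperbolic of rank 3: x ↦ xᵀAx over ℝ is equivalent to the weighted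
    -- sum of squares with weights (1,1,-1,0,…,0)
    (∃ P : Matrix (Fin 4) (Fin 4) ℝ, IsUnit P.det ∧
      Pᵀ * A.map ((↑·) : ℤ → ℝ) * P = Matrix.diagonal ![(1:ℝ),1,-1,0]) ∧
    -- (d) lattice Weyl vector of negative square
    (∃ c : Fin 4 → ℚ, (∀ i, (A.map ((↑·) : ℤ → ℚ)).mulVec c i = -1) ∧
      c ⬝ᵥ (A.map ((↑·) : ℤ → ℚ)).mulVec c < 0) := by
  intro A
  have hA : A = circulant ![2, -2, -6, -2] := by decide
  have hv : ∀ k : Fin 4, k ≠ 0 → ![(2 : ℤ), -2, -6, -2] k ≤ 0 := by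
    simp [Fin.forall_fin_succ]
  have hA_map (K : Type) [Field K] : A.map ((↑·) : ℤ → K) = circulant ![2, -2, -6, -2] := by
    rw [hA, map_circulant, circulant_inj]
    simp [funext_iff, Fin.forall_fin_succ]
  have hF (K : Type) [Field K] [CharZero K] : IsUnit (realFourierMatrix K).det :=
    isUnit_det_realFourierMatrix K two_ne_zero.isUnit
  have hdiag (K : Type) [Field K] : (realFourierMatrix K)ᵀ * A.map ((↑·) : ℤ → K) *
      realFourierMatrix K = diagonal ![16, 16, -32, 0] := by
    rw [hA_map, transpose_realFourierMatrix_mul_circulant_mul]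
    norm_num
  refine ⟨⟨by decide, by decide, fun i j hij ↦ ?_⟩, ?_, ?_, ?_⟩
  · exact hA ▸ hv (i - j) (sub_ne_zero.mpr hij)
  · rw [rank_eq_card_of_mul_mul_eq_diagonal (isUnit_det_transpose _ (hF ℚ)) (hF ℚ) (hdiag ℚ)]
    decide
  · have hsign : (fun i ↦ (SignType.sign (![(16 : ℝ), 16, -32, 0] i) : ℝ)) = ![1, 1, -1, 0] := by
      simp [funext_iff, Fin.forall_fin_succ]
    exact hsign ▸ exists_congruent_diagonal_sign (hF ℝ) (hdiag ℝ)
  · refine exists_mulVec_eq_neg_one_and_dotProduct_neg (s := -8) (by norm_num) fun i ↦ ?_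
    rw [hA_map, sum_row_circulant]
    norm_num [Fin.sum_univ_succ]
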